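/- For N even and p ≥ 2, the optimal constant C(N,p,2) := sup over unit vectors a ∈ ℝ^N and pairwise independent Rademacher vectors ε of (E|∑ᵢ aᵢεᵢ|^p)^{1/p} equals N^{1/2−1/p}. -/

import Mathlib

open MeasureTheory ENNReal

noncomputable section

/-- A family `ε` of ±1-valued (Rademacher) random variables which is `k`-wise independent:
every collection of at most `k` coordinates takes any prescribed pattern of signs with
probability `(1/2)^(number of coordinates)`. -/
def IsKWiseRademacher {Ω : Type*} [MeasurableSpace Ω] (μ : Measure Ω)
    {ι : Type*} [DecidableEq ι] (k : ℕ) (ε : ι → Ω → ℝ) : Prop :=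
  (∀ i, Measurable (ε i)) ∧
  ∀ s : Finset ι, s.card ≤ k → ∀ σ : ι → ℝ, (∀ i, σ i = 1 ∨ σ i = -1) →
    μ {ω | ∀ i ∈ s, ε i ω = σ i} = (2 : ℝ≥0∞)⁻¹ ^ s.card

/-- `CNpk N p k` : the best constant in the upper Khintchine inequality with exponent `p`
over all `k`-wise independent Rademacher vectors of length `N` and unit vectors `a`. -/
def CNpk (N : ℕ) (p : ℝ) (k : ℕ) : ℝ :=
  sSup {x : ℝ | ∃ (Ω : Type) (_ : MeasurableSpace Ω) (μ : Measure Ω),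
    IsProbabilityMeasure μ ∧ ∃ (ε : Fin N → Ω → ℝ) (a : Fin N → ℝ),
      IsKWiseRademacher μ k ε ∧ (∑ i, (a i) ^ 2 = 1) ∧
      x = (∫ ω, |∑ i, a i * ε i ω| ^ p ∂μ) ^ (1 / p)}

namespace KhAux

/-- value of the indicator of a sign -/
lemma sign_cases {x s : ℝ} (hx : x = 1 ∨ x = -1) (hs : s = 1 ∨ s = -1) :
    (if x = s then (1 : ℝ) else 0) = (1 + s * x) / 2 := by
  rcases hx with rfl | rfl <;> rcases hs with rfl | rfl <;> norm_num

section upper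

variable {Ω : Type} [MeasurableSpace Ω] {μ : Measure Ω} [IsProbabilityMeasure μ]
  {N : ℕ} {ε : Fin N → Ω → ℝ}

lemma meas_one (h : IsKWiseRademacher μ 2 ε) (i : Fin N) (s : ℝ) (hs : s = 1 ∨ s = -1) :
    μ {ω | ε i ω = s} = 2⁻¹ := by
  have := h.2 {i} (by simp) (fun _ => s) (fun _ => hs)
  simpa using this

lemma meas_two (h : IsKWiseRademacher μ 2 ε) {i j : Fin N} (hij : i ≠ j) (s t : ℝ)
    (hs : s = 1 ∨ s = -1) (ht : t = 1 ∨ t = -1) :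
    μ.real {ω | ε i ω = s ∧ ε j ω = t} = 1 / 4 := by
  have := h.2 {i, j} (by rw [Finset.card_pair hij]) (fun k => if k = i then s else t)
    (fun k => by split_ifs <;> assumption)
  rw [Finset.card_pair hij] at this
  simp only [Finset.mem_insert, Finset.mem_singleton, forall_eq_or_imp, forall_eq, if_true,
    if_neg hij.symm] at this
  rw [Measure.real, this]
  simp
  norm_num

lemma ae_sign (h : IsKWiseRademacher μ 2 ε) (i : Fin N) :
    ∀ᵐ ω ∂μ, ε i ω = 1 ∨ ε i ω = -1 := by
  have m : ∀ s : ℝ, MeasurableSet {ω | ε i ω = s} := fun s =>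
    (h.1 i) (measurableSet_singleton s)
  have hU : μ ({ω | ε i ω = 1} ∪ {ω | ε i ω = -1}) = 1 := by
    rw [measure_union _ (m _), meas_one h i _ (Or.inl rfl), meas_one h i _ (Or.inr rfl),
      ENNReal.inv_two_add_inv_two]
    rw [Set.disjoint_left]
    intro ω h1 h2
    simp only [Set.mem_ofPred_eq] at h1 h2
    rw [h1] at h2
    norm_num at h2
  have := (prob_compl_eq_zero_iff ((m 1).union (m (-1)))).2 hU
  rw [ae_iff]
  convert this using 2
  ext ω
  simp

lemma integral_pair (h : IsKWiseRademacher μ 2 ε) {i j : Fin N} (hij : i ≠ j) :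
    ∫ ω, ε i ω * ε j ω ∂μ = 0 := by
  let A : ℝ → ℝ → Set Ω := fun s t => {ω | ε i ω = s ∧ ε j ω = t}
  have mA : ∀ s t, MeasurableSet (A s t) := fun s t =>
    ((h.1 i) (measurableSet_singleton s)).inter ((h.1 j) (measurableSet_singleton t))
  have hI : ∀ s t, Integrable ((A s t).indicator (fun _ => (1 : ℝ))) μ := fun s t =>
    (integrable_const (1 : ℝ)).indicator (mA s t)
  have hv : ∀ s t, (s = 1 ∨ s = -1) → (t = 1 ∨ t = -1) →
      ∫ ω, (A s t).indicator (fun _ => (1 : ℝ)) ω ∂μ = 1 / 4 := by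
    intro s t hs ht
    rw [integral_indicator (mA s t)]
    simpa using meas_two h hij s t hs ht
  have e : (fun ω => ε i ω * ε j ω) =ᵐ[μ] fun ω =>
      ((A 1 1).indicator (fun _ => (1 : ℝ)) ω + (A (-1) (-1)).indicator (fun _ => (1 : ℝ)) ω)
      - ((A 1 (-1)).indicator (fun _ => (1 : ℝ)) ω
        + (A (-1) 1).indicator (fun _ => (1 : ℝ)) ω) := by
    filter_upwards [ae_sign h i, ae_sign h j] with ω h1 h2
    simp only [A, Set.indicator, Set.mem_ofPred_eq]
    rcases h1 with h1 | h1 <;> rcases h2 with h2 | h2 <;> rw [h1, h2] <;> norm_num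
  rw [integral_congr_ae e, integral_sub ((hI _ _).fun_add (hI _ _)) ((hI _ _).fun_add (hI _ _)),
    integral_add (hI _ _) (hI _ _), integral_add (hI _ _) (hI _ _),
    hv _ _ (by simp) (by simp), hv _ _ (by simp) (by simp), hv _ _ (by simp) (by simp),
    hv _ _ (by simp) (by simp)]
  norm_num

lemma integrable_pair (h : IsKWiseRademacher μ 2 ε) (i j : Fin N) :
    Integrable (fun ω => ε i ω * ε j ω) μ := by
  refine Integrable.of_bound ((h.1 i).mul (h.1 j)).aestronglyMeasurable 1 ?_
  filter_upwards [ae_sign h i, ae_sign h j] with ω h1 h2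
  rcases h1 with h1 | h1 <;> rcases h2 with h2 | h2 <;> rw [h1, h2] <;> norm_num

lemma sq_expand (a : Fin N → ℝ) (ω : Ω) :
    (∑ i, a i * ε i ω) ^ 2 = ∑ i, ∑ j, a i * a j * (ε i ω * ε j ω) := by
  rw [sq, Finset.sum_mul_sum]
  refine Finset.sum_congr rfl fun i _ => Finset.sum_congr rfl fun j _ => by ring

lemma integrable_sq (h : IsKWiseRademacher μ 2 ε) (a : Fin N → ℝ) :
    Integrable (fun ω => (∑ i, a i * ε i ω) ^ 2) μ := by
  simp_rw [sq_expand]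
  exact integrable_finsetSum _ fun i _ => integrable_finsetSum _ fun j _ =>
    (integrable_pair h i j).const_mul _

lemma integral_sq (h : IsKWiseRademacher μ 2 ε) (a : Fin N → ℝ) (ha : ∑ i, a i ^ 2 = 1) :
    ∫ ω, (∑ i, a i * ε i ω) ^ 2 ∂μ = 1 := by
  simp_rw [sq_expand]
  rw [integral_finsetSum _ fun i _ => integrable_finsetSum _ fun j _ =>
    (integrable_pair h i j).const_mul _]
  rw [← ha]
  refine Finset.sum_congr rfl fun i _ => ?_
  rw [integral_finsetSum _ fun j _ => (integrable_pair h i j).const_mul _]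
  rw [Finset.sum_eq_single i]
  · rw [integral_const_mul]
    have : ∫ ω, ε i ω * ε i ω ∂μ = ∫ ω, (1 : ℝ) ∂μ := by
      refine integral_congr_ae ?_
      filter_upwards [ae_sign h i] with ω h1
      rcases h1 with h1 | h1 <;> rw [h1] <;> norm_num
    rw [this]
    simp [sq]
  · intro j _ hj
    rw [integral_const_mul, integral_pair h hj.symm, mul_zero]
  · simp

lemma abs_bound (h : IsKWiseRademacher μ 2 ε) (a : Fin N → ℝ) (ha : ∑ i, a i ^ 2 = 1) :
    ∀ᵐ ω ∂μ, |∑ i, a i * ε i ω| ≤ √N := by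
  have : ∀ᵐ ω ∂μ, ∀ i, ε i ω = 1 ∨ ε i ω = -1 := ae_all_iff.2 (ae_sign h)
  filter_upwards [this] with ω hω
  apply Real.abs_le_sqrt
  have := Finset.sum_mul_sq_le_sq_mul_sq Finset.univ a (fun i => ε i ω)
  have h1 : ∑ i, (ε i ω) ^ 2 = N := by
    rw [Finset.sum_congr rfl (g := fun _ => (1 : ℝ))]
    · simp
    · intro i _
      rcases hω i with h1 | h1 <;> rw [h1] <;> norm_num
  rw [ha, h1, one_mul] at this
  exact this

lemma upper (hN : 0 < N) (p : ℝ) (hp : 2 ≤ p) (h : IsKWiseRademacher μ 2 ε)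
    (a : Fin N → ℝ) (ha : ∑ i, a i ^ 2 = 1) :
    (∫ ω, |∑ i, a i * ε i ω| ^ p ∂μ) ^ (1 / p) ≤ (N : ℝ) ^ ((1 : ℝ) / 2 - 1 / p) := by
  have hN' : (0 : ℝ) < N := by exact_mod_cast hN
  have key : ∫ ω, |∑ i, a i * ε i ω| ^ p ∂μ ≤ (N : ℝ) ^ ((p - 2) / 2) := by
    calc ∫ ω, |∑ i, a i * ε i ω| ^ p ∂μ
        ≤ ∫ ω, (N : ℝ) ^ ((p - 2) / 2) * (∑ i, a i * ε i ω) ^ 2 ∂μ := by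
          refine integral_mono_of_nonneg (Filter.Eventually.of_forall fun ω => by positivity)
            ((integrable_sq h a).const_mul _) ?_
          filter_upwards [abs_bound h a ha] with ω hω
          have e : |∑ i, a i * ε i ω| ^ p
              = |∑ i, a i * ε i ω| ^ (p - 2) * (∑ i, a i * ε i ω) ^ 2 := by
            rw [← sq_abs (∑ i, a i * ε i ω), ← Real.rpow_natCast,
              ← Real.rpow_add_of_nonneg (abs_nonneg _) (by linarith) (by norm_num)]
            norm_num
          rw [e]
          refine mul_le_mul_of_nonneg_right ?_ (sq_nonneg _)
          calc _ ≤ (√(N : ℝ)) ^ (p - 2) :=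
                Real.rpow_le_rpow (abs_nonneg _) hω (by linarith)
            _ = _ := by
                rw [Real.sqrt_eq_rpow, ← Real.rpow_mul hN'.le]
                congr 1; ring
      _ = _ := by rw [integral_const_mul, integral_sq h a ha, mul_one]
  calc _ ≤ ((N : ℝ) ^ ((p - 2) / 2)) ^ (1 / p) :=
        Real.rpow_le_rpow (integral_nonneg fun ω => by positivity) key (by positivity)
    _ = _ := by
        rw [← Real.rpow_mul hN'.le]
        congr 1
        field_simp

end upper

section lower

lemma kwise_of_moments {Ω : Type} [MeasurableSpace Ω] (μ : Measure Ω) [IsProbabilityMeasure μ]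
    {N : ℕ} (ε : Fin N → Ω → ℝ) (hm : ∀ i, Measurable (ε i))
    (hs : ∀ i ω, ε i ω = 1 ∨ ε i ω = -1)
    (h1 : ∀ i, ∫ ω, ε i ω ∂μ = 0)
    (h2 : ∀ i j, i ≠ j → ∫ ω, ε i ω * ε j ω ∂μ = 0) : IsKWiseRademacher μ 2 ε := by
  refine ⟨hm, fun s hsc σ hσ => ?_⟩
  have hb : ∀ i ω, ‖ε i ω‖ ≤ 1 := by
    intro i ω
    rcases hs i ω with h | h <;> rw [h] <;> norm_num
  have I1 : ∀ i, Integrable (ε i) μ := fun i =>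
    Integrable.of_bound (hm i).aestronglyMeasurable 1 (Filter.Eventually.of_forall (hb i))
  have I2 : ∀ i j, Integrable (fun ω => ε i ω * ε j ω) μ := fun i j =>
    Integrable.of_bound ((hm i).mul (hm j)).aestronglyMeasurable 1
      (Filter.Eventually.of_forall fun ω => by
        rw [norm_mul]; exact mul_le_one₀ (hb i ω) (norm_nonneg _) (hb j ω))
  have mA : MeasurableSet {ω | ∀ i ∈ s, ε i ω = σ i} := by
    have : {ω | ∀ i ∈ s, ε i ω = σ i} = ⋂ i ∈ s, {ω | ε i ω = σ i} := by
      ext; simp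
    rw [this]
    exact Finset.measurableSet_biInter _ fun i _ => (hm i) (measurableSet_singleton _)
  suffices hr : μ.real {ω | ∀ i ∈ s, ε i ω = σ i} = (2 : ℝ)⁻¹ ^ s.card by
    rw [← ENNReal.toReal_eq_toReal_iff' (measure_ne_top _ _) (by simp)]
    simpa [Measure.real] using hr
  have hi : μ.real {ω | ∀ i ∈ s, ε i ω = σ i}
      = ∫ ω, ∏ i ∈ s, ((1 + σ i * ε i ω) / 2) ∂μ := by
    have : (fun ω => ∏ i ∈ s, ((1 + σ i * ε i ω) / 2))
        = {ω | ∀ i ∈ s, ε i ω = σ i}.indicator (fun _ => (1 : ℝ)) := by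
      funext ω
      rw [Finset.prod_congr rfl fun i _ => (sign_cases (hs i ω) (hσ i)).symm]
      rw [Finset.prod_ite_zero]
      simp [Set.indicator]
    rw [this, integral_indicator mA]
    simp
  rw [hi]
  interval_cases hc : s.card
  · rw [Finset.card_eq_zero] at hc
    subst hc
    simp
  · obtain ⟨i, rfl⟩ := Finset.card_eq_one.1 hc
    simp only [Finset.prod_singleton]
    rw [integral_div, integral_add (integrable_const _) ((I1 i).const_mul _),
      integral_const_mul, h1]
    simp
  · obtain ⟨i, j, hij, rfl⟩ := Finset.card_eq_two.1 hc
    simp only [Finset.prod_pair hij]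
    have : ∀ ω, (1 + σ i * ε i ω) / 2 * ((1 + σ j * ε j ω) / 2)
        = (1 + σ i * ε i ω + (σ j * ε j ω + σ i * σ j * (ε i ω * ε j ω))) / 4 := by
      intro ω; ring
    simp_rw [this]
    rw [integral_div, integral_add ((integrable_const _).fun_add ((I1 i).const_mul _))
      (((I1 j).const_mul _).fun_add ((I2 i j).const_mul _)),
      integral_add (integrable_const _) ((I1 i).const_mul _),
      integral_add ((I1 j).const_mul _) ((I2 i j).const_mul _),
      integral_const_mul, integral_const_mul, integral_const_mul, h1, h1, h2 i j hij]
    simp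
    norm_num

/-- The weight of a sign pattern with `k` plus signs. -/
def wt (N k : ℕ) : ℝ :=
  (if k = N / 2 then ((N : ℝ) - 1) / N / (N.choose (N / 2)) else 0)
    + (if k = 0 ∨ k = N then 1 / (2 * (N : ℝ)) else 0)

lemma wt_nonneg {N : ℕ} (hN : 0 < N) (k : ℕ) : 0 ≤ wt N k := by
  have : (1 : ℝ) ≤ N := by exact_mod_cast hN
  have h : (0 : ℝ) ≤ N - 1 := by linarith
  unfold wt
  split_ifs <;> positivity

lemma wt_symm {N : ℕ} (hNe : Even N) {k : ℕ} (hk : k ≤ N) : wt N (N - k) = wt N k := by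
  obtain ⟨m, rfl⟩ := hNe
  unfold wt
  have a : (m + m - k = (m + m) / 2) ↔ k = (m + m) / 2 := by omega
  have b : (m + m - k = 0 ∨ m + m - k = m + m) ↔ (k = 0 ∨ k = m + m) := by omega
  simp only [a, b]

lemma wt_sum {N : ℕ} (hN : 0 < N) (F : Finset (Fin N) → ℝ) (c : ℝ)
    (hF : ∀ s : Finset (Fin N), s.card = N / 2 → F s = c) :
    ∑ s : Finset (Fin N), wt N s.card * F s
      = ((N : ℝ) - 1) / N * c + (F ∅ + F Finset.univ) / (2 * N) := by
  have hne : (∅ : Finset (Fin N)) ≠ Finset.univ := by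
    intro h
    have := congrArg Finset.card h
    simp at this
    omega
  simp only [wt, add_mul, Finset.sum_add_distrib, ite_mul, zero_mul]
  congr 1
  · rw [← Finset.sum_filter]
    rw [Finset.sum_congr rfl (g := fun _ => ((N : ℝ) - 1) / N / (N.choose (N / 2)) * c)]
    · rw [Finset.sum_const]
      have : (Finset.univ.filter fun s : Finset (Fin N) => s.card = N / 2).card
          = N.choose (N / 2) := by
        rw [Finset.univ_filter_card_eq, Finset.card_powersetCard]; simp
      rw [this, nsmul_eq_mul]
      have h0 : ((N.choose (N / 2) : ℕ) : ℝ) ≠ 0 := by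
        exact_mod_cast (Nat.choose_pos (Nat.div_le_self _ _)).ne'
      field_simp
    · intro s hs
      rw [hF s (Finset.mem_filter.1 hs).2]
  · rw [← Finset.sum_filter]
    have : (Finset.univ.filter fun s : Finset (Fin N) => s.card = 0 ∨ s.card = N)
        = {∅, Finset.univ} := by
      ext s
      have := Finset.card_eq_iff_eq_univ s
      rw [Fintype.card_fin] at this
      simp [this]
    rw [this, Finset.sum_pair hne]
    ring

/-- The sign pattern with plus signs on `s`. -/
def sg {N : ℕ} (i : Fin N) (s : Finset (Fin N)) : ℝ := if i ∈ s then 1 else -1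

lemma sg_cases {N : ℕ} (i : Fin N) (s : Finset (Fin N)) : sg i s = 1 ∨ sg i s = -1 := by
  unfold sg; split_ifs <;> simp

lemma sg_sum {N : ℕ} (s : Finset (Fin N)) : ∑ i, sg i s = 2 * s.card - N := by
  have : ∀ i, sg i s = 2 * (if i ∈ s then 1 else 0) - 1 := by
    intro i; unfold sg; split_ifs <;> norm_num
  simp_rw [this]
  rw [Finset.sum_sub_distrib, ← Finset.mul_sum]
  simp

lemma mean_zero {N : ℕ} (hNe : Even N) (i : Fin N) :
    ∑ s : Finset (Fin N), wt N s.card * sg i s = 0 := by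
  have h : ∑ s : Finset (Fin N), wt N s.card * sg i s
      = ∑ s : Finset (Fin N), -(wt N s.card * sg i s) := by
    refine Fintype.sum_equiv (Equiv.ofBijective compl compl_bijective) _ _ fun s => ?_
    simp only [Equiv.ofBijective_apply, Finset.card_compl, Fintype.card_fin]
    rw [wt_symm hNe (by simpa using s.card_le_univ)]
    have : sg i sᶜ = - sg i s := by
      unfold sg
      by_cases hi : i ∈ s <;> simp [hi]
    rw [this]; ring
  rw [Finset.sum_neg_distrib] at h
  linarith

lemma corr_const {N : ℕ} {i j l : Fin N} (hj : i ≠ j) (hl : i ≠ l) :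
    ∑ s : Finset (Fin N), wt N s.card * (sg i s * sg l s)
      = ∑ s : Finset (Fin N), wt N s.card * (sg i s * sg j s) := by
  refine Fintype.sum_equiv (Equiv.finsetCongr (Equiv.swap j l)) _ _ fun s => ?_
  have : ∀ k, sg k (Equiv.finsetCongr (Equiv.swap j l) s) = sg (Equiv.swap j l k) s := by
    intro k
    unfold sg
    congr 1
    simp [Equiv.finsetCongr_apply, Finset.mem_map_equiv]
  rw [this, this, Equiv.swap_apply_left, Equiv.swap_apply_of_ne_of_ne hj hl]
  simp

lemma corr_zero {N : ℕ} (hN : 0 < N) (hNe : Even N) {i j : Fin N} (hij : i ≠ j) :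
    ∑ s : Finset (Fin N), wt N s.card * (sg i s * sg j s) = 0 := by
  have hN' : (0 : ℝ) < N := by exact_mod_cast hN
  have bal : ∀ s : Finset (Fin N), s.card = N / 2 → ∑ l, sg l s = 0 := by
    intro s hs
    rw [sg_sum, hs]
    obtain ⟨m, rfl⟩ := hNe
    have : (m + m) / 2 = m := by omega
    rw [this]; push_cast; ring
  have tot := wt_sum hN (fun s => sg i s * ∑ l, sg l s) 0 (fun s hs => by simp [bal s hs])
  have one := wt_sum hN (fun s => sg i s * sg i s) 1 (fun s _ => by
    rcases sg_cases i s with h | h <;> rw [h] <;> norm_num)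
  have swap : ∑ s : Finset (Fin N), wt N s.card * (sg i s * ∑ l, sg l s)
      = ∑ l, ∑ s : Finset (Fin N), wt N s.card * (sg i s * sg l s) := by
    simp_rw [Finset.mul_sum]
    rw [Finset.sum_comm]
  beta_reduce at tot
  rw [swap] at tot
  simp only [sg_sum] at tot
  rw [← Finset.add_sum_erase _ _ (Finset.mem_univ i), one,
    Finset.sum_congr rfl fun l hl => corr_const hij (Finset.ne_of_mem_erase hl).symm,
    Finset.sum_const, Finset.card_erase_of_mem (Finset.mem_univ i), nsmul_eq_mul] at tot
  simp only [sg, Finset.card_univ, Fintype.card_fin, Finset.notMem_empty, Finset.mem_univ,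
    if_true, if_false, Finset.card_empty] at tot
  have h2 : 2 ≤ N := by
    obtain ⟨m, rfl⟩ := hNe
    omega
  have h3 : ((N - 1 : ℕ) : ℝ) ≠ 0 := by
    have : N - 1 ≠ 0 := by omega
    exact_mod_cast this
  have h4 : ((N - 1 : ℕ) : ℝ) * ∑ s : Finset (Fin N), wt N s.card * (sg i s * sg j s) = 0 := by
    have e1 : ((N : ℝ) - 1) / N * 1 + (-1 * -1 + 1 * 1) / (2 * N) = 1 := by field_simp; ring
    have e2 : ((N : ℝ) - 1) / N * 0
      + (-1 * (2 * ((0 : ℕ) : ℝ) - N) + 1 * (2 * (N : ℝ) - N)) / (2 * N) = 1 := by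
      push_cast; field_simp; ring
    rw [e1, e2] at tot
    unfold sg
    linarith
  exact (mul_eq_zero.1 h4).resolve_left h3

instance instMS (N : ℕ) : MeasurableSpace (Finset (Fin N)) := ⊤

/-- The extremal measure. -/
def ms (N : ℕ) : Measure (Finset (Fin N)) :=
  ∑ s : Finset (Fin N), ENNReal.ofReal (wt N s.card) • Measure.dirac s

lemma meas_any {N : ℕ} (f : Finset (Fin N) → ℝ) : Measurable f := fun _ _ => trivial

lemma integral_ms {N : ℕ} (hN : 0 < N) (f : Finset (Fin N) → ℝ) :
    ∫ s, f s ∂(ms N) = ∑ s : Finset (Fin N), wt N s.card * f s := by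
  unfold ms
  rw [integral_finsetSum_measure]
  · refine Finset.sum_congr rfl fun s _ => ?_
    rw [integral_smul_measure, integral_dirac' _ _ (meas_any f).stronglyMeasurable,
      ENNReal.toReal_ofReal (wt_nonneg hN _), smul_eq_mul]
  · intro s _
    refine Integrable.smul_measure ?_ ENNReal.ofReal_ne_top
    exact integrable_dirac' (meas_any f).stronglyMeasurable (by simp)

lemma prob_ms {N : ℕ} (hN : 0 < N) : IsProbabilityMeasure (ms N) := by
  constructor
  have hN' : (0 : ℝ) < N := by exact_mod_cast hN
  have := wt_sum hN (fun _ => 1) 1 (fun _ _ => rfl)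
  simp only [mul_one] at this
  simp only [ms, Measure.coe_finsetSum, Finset.sum_apply, Measure.smul_apply, measure_univ,
    smul_eq_mul, mul_one]
  rw [← ENNReal.ofReal_sum_of_nonneg fun s _ => wt_nonneg hN _, this]
  rw [ENNReal.ofReal_eq_one]
  field_simp; ring

lemma attained {N : ℕ} (hN : 0 < N) (hNe : Even N) (p : ℝ) (hp : 2 ≤ p) :
    (∫ s, |∑ i, (1 / √(N : ℝ)) * sg i s| ^ p ∂(ms N)) ^ (1 / p)
      = (N : ℝ) ^ ((1 : ℝ) / 2 - 1 / p) := by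
  have hN' : (0 : ℝ) < N := by exact_mod_cast hN
  rw [integral_ms hN]
  simp_rw [← Finset.mul_sum, sg_sum]
  rw [wt_sum hN _ 0]
  · have e1 : |1 / √(N : ℝ) * (2 * (((∅ : Finset (Fin N)).card : ℕ) : ℝ) - N)|
        = (N : ℝ) ^ ((1 : ℝ) / 2) := by
      rw [← Real.sqrt_eq_rpow]
      simp only [Finset.card_empty, Nat.cast_zero, mul_zero, zero_sub, mul_neg, abs_neg]
      rw [abs_of_nonneg (by positivity), one_div_mul_eq_div, Real.div_sqrt]
    have e2 : |1 / √(N : ℝ) * (2 * (((Finset.univ : Finset (Fin N)).card : ℕ) : ℝ) - N)|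
        = (N : ℝ) ^ ((1 : ℝ) / 2) := by
      rw [← Real.sqrt_eq_rpow, Finset.card_univ, Fintype.card_fin]
      rw [show 2 * (N : ℝ) - N = N by ring]
      rw [abs_of_nonneg (by positivity), one_div_mul_eq_div, Real.div_sqrt]
    rw [e1, e2, ← Real.rpow_mul hN'.le]
    have e3 : ((N : ℝ) - 1) / N * 0 + ((N : ℝ) ^ (1 / 2 * p) + (N : ℝ) ^ (1 / 2 * p)) / (2 * N)
        = (N : ℝ) ^ (1 / 2 * p - 1) := by
      rw [Real.rpow_sub_one hN'.ne']
      field_simp; ring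
    rw [e3, ← Real.rpow_mul hN'.le]
    congr 1
    field_simp
  · intro s hs
    rw [hs]
    obtain ⟨m, rfl⟩ := hNe
    have : (m + m) / 2 = m := by omega
    rw [this]; push_cast
    rw [show (2 : ℝ) * m - (m + m) = 0 by ring, mul_zero, abs_zero, Real.zero_rpow (by linarith)]

end lower

end KhAux

/-- for `N` even and `p ≥ 2`, the optimal pairwise-independent Khintchine
constant is `C(N,p,2) = N^{1/2 - 1/p}`. -/
theorem CNp2_eq {N : ℕ} (hN : 0 < N) (hNe : Even N) (p : ℝ) (hp : 2 ≤ p) :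
    CNpk N p 2 = (N : ℝ) ^ ((1 : ℝ) / 2 - 1 / p) := by
  refine IsGreatest.csSup_eq ⟨?_, ?_⟩
  · have hN' : (0 : ℝ) < N := by exact_mod_cast hN
    have := KhAux.prob_ms hN
    refine ⟨Finset (Fin N), KhAux.instMS N, KhAux.ms N, this, fun i s => KhAux.sg i s,
      fun _ => 1 / √(N : ℝ), ?_, ?_, (KhAux.attained hN hNe p hp).symm⟩
    · refine KhAux.kwise_of_moments _ _ (fun i => KhAux.meas_any _) KhAux.sg_cases ?_ ?_
      · intro i
        rw [KhAux.integral_ms hN]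
        exact KhAux.mean_zero hNe i
      · intro i j hij
        rw [KhAux.integral_ms hN]
        exact KhAux.corr_zero hN hNe hij
    · rw [Finset.sum_const, Finset.card_univ, Fintype.card_fin, div_pow, Real.sq_sqrt hN'.le,
        nsmul_eq_mul]
      field_simp
  · rintro x ⟨Ω, mΩ, μ, hμ, ε, a, hε, ha, rfl⟩
    exact KhAux.upper hN p hp hε a ha
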